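/- Let K > 0 and J ∈ ℝ, and assume φ_{K,J} attains its minimum over [−1,1] at a unique point m* ∈ (−1,1) with φ_{K,J}''(m*) > 0. Then there exists a constant c = c(K,J) > 0 such that for all n ≥ 1 and all z ∈ ℝ, |P_{n,K,J}(W_n ≤ z) − Φ(z)| ≤ c/((1 + |z|)·√n), where Φ is the standard normal distribution function. -/

import Mathlib

/-!
The normalized magnetization takes its values on a lattice of spacing `h = 2√(φ''(m*)/n)`. By
Stirling's formula the weight of a lattice point is `exp (-n φ)` times a correction whose logarithm
varies slowly, because the increments of `log j! - j log j + j` lie in `[0, 1/(j+1)]`.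
Near `m*` the exponent is quadratic up to a cubic error; away from `m*` the weight is exponentially
small. So the rescaled weight at the lattice point `x` is `exp (-x²/2) + O((1+|x|)⁻² n^{-1/2})`.

Replacing Gaussian values by cell masses of `Φ` costs `O(h² (1+|x|)⁻²)` per lattice point, and
`∑ h (1+|x|)⁻²` over the lattice points `x ≤ z ≤ 0` is `O((1+|z|)⁻¹)`. This gives the bound for
`z ≤ 0`; for `z ≥ 0` apply the same estimate to the reflected lattice.
-/

open MeasureTheory ProbabilityTheory Real Filter

noncomputable section

/-- The spin value `±1` associated with a Boolean. -/
def spin (b : Bool) : ℝ := if b then 1 else -1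

/-- Total magnetization `S_n(x) = ∑ i, x_i`. -/
def totalMag (n : ℕ) (x : Fin n → Bool) : ℝ := ∑ i, spin (x i)

/-- Magnetization per particle `m_n(x) = S_n(x)/n`. -/
def magPP (n : ℕ) (x : Fin n → Bool) : ℝ := totalMag n x / n

/-- Boltzmann–Gibbs weight of a configuration in the cubic Curie–Weiss model
(the reference factor `2^{-n}` is constant and cancels upon normalization). -/
def cubicWeight (n : ℕ) (K J : ℝ) (x : Fin n → Bool) : ℝ :=
  Real.exp (n * (K / 3 * (magPP n x) ^ 3 + J / 2 * (magPP n x) ^ 2))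

/-- The cubic Curie–Weiss Boltzmann–Gibbs probability measure `P_{n,K,J}`. -/
def cubicMeasure (n : ℕ) (K J : ℝ) : Measure (Fin n → Bool) :=
  (∑ x : Fin n → Bool, ENNReal.ofReal (cubicWeight n K J x))⁻¹ •
    ∑ x : Fin n → Bool, ENNReal.ofReal (cubicWeight n K J x) • Measure.dirac x

/-- The probability of an event under `P_{n,K,J}`, as a real number. -/
def cubicProb (n : ℕ) (K J : ℝ) (s : Set (Fin n → Bool)) : ℝ :=
  (cubicMeasure n K J s).toReal

/-- The binary relative entropy `I(m)`. -/
def binEnt (m : ℝ) : ℝ :=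
  (1 - m) / 2 * Real.log ((1 - m) / 2) + (1 + m) / 2 * Real.log ((1 + m) / 2)

/-- The function `φ_{K,J}(x) = I(x) − (K/3)x³ − (J/2)x²`. -/
def phiKJ (K J : ℝ) (x : ℝ) : ℝ := binEnt x - K / 3 * x ^ 3 - J / 2 * x ^ 2

/-- The standard normal cumulative distribution function. -/
def stdNormalCDF (z : ℝ) : ℝ :=
  (ProbabilityTheory.gaussianReal 0 1 (Set.Iic z)).toReal

end

/-! ### Stirling's formula for binomial coefficients -/

/-- The remainder `log j! - (j log j - j)` of the leading term of Stirling's formula. It is `0` at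
`j = 0` and `(log (2πj)) / 2 + o(1)` as `j → ∞`. -/
noncomputable def stirlingRemainder (j : ℕ) : ℝ :=
  log j.factorial - j * log j + j

lemma stirlingRemainder_zero : stirlingRemainder 0 = 0 := by
  simp [stirlingRemainder]

lemma stirlingRemainder_succ_sub (j : ℕ) :
    stirlingRemainder (j + 1) - stirlingRemainder j = 1 - j * log ((j + 1) / j) := by
  rcases j.eq_zero_or_pos with rfl | hj
  · simp [stirlingRemainder]
  have hj' : (j : ℝ) ≠ 0 := by positivity
  have hsucc : (j : ℝ) + 1 ≠ 0 := by positivity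
  have hfactorial : log (j + 1).factorial = log (j + 1) + log j.factorial := by
    rw [Nat.factorial_succ, Nat.cast_mul, Nat.cast_succ, log_mul hsucc (by positivity)]
  rw [log_div hsucc hj', stirlingRemainder, stirlingRemainder, hfactorial]
  push_cast
  ring

lemma stirlingRemainder_le_succ (j : ℕ) : stirlingRemainder j ≤ stirlingRemainder (j + 1) := by
  rw [← sub_nonneg, stirlingRemainder_succ_sub, sub_nonneg]
  rcases j.eq_zero_or_pos with rfl | hj
  · simp
  calc (j : ℝ) * log ((j + 1) / j) ≤ j * ((j + 1) / j - 1) := by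
        gcongr
        exact log_le_sub_one_of_pos (by positivity)
    _ = 1 := by field_simp; ring

lemma stirlingRemainder_succ_sub_le (j : ℕ) :
    stirlingRemainder (j + 1) - stirlingRemainder j ≤ 1 / (j + 1) := by
  rw [stirlingRemainder_succ_sub, sub_le_comm]
  rcases j.eq_zero_or_pos with rfl | hj
  · simp
  calc (1 : ℝ) - 1 / (j + 1) = j * (1 - ((j + 1) / j : ℝ)⁻¹) := by field_simp; ring
    _ ≤ j * log ((j + 1) / j) := by
        gcongr
        exact one_sub_inv_le_log_of_pos (by positivity)

lemma stirlingRemainder_monotone : Monotone stirlingRemainder :=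
  monotone_nat_of_le_succ stirlingRemainder_le_succ

lemma stirlingRemainder_nonneg (j : ℕ) : 0 ≤ stirlingRemainder j :=
  stirlingRemainder_zero ▸ stirlingRemainder_monotone j.zero_le

lemma stirlingRemainder_le_one_add_log (n : ℕ) : stirlingRemainder n ≤ 1 + log n := by
  suffices stirlingRemainder n ≤ harmonic n from this.trans (harmonic_le_one_add_log n)
  induction n with
  | zero => simp [stirlingRemainder_zero]
  | succ j ih =>
    have hstep := stirlingRemainder_succ_sub_le j
    rw [harmonic_succ]
    push_cast
    rw [one_div] at hstep
    linarith

lemma stirlingRemainder_sub_le {i j : ℕ} (h : i ≤ j) :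
    stirlingRemainder j - stirlingRemainder i ≤ (j - i) / (i + 1) := by
  induction j, h using Nat.le_induction with
  | base => simp
  | succ j hij ih =>
    have hstep : stirlingRemainder (j + 1) - stirlingRemainder j ≤ 1 / (i + 1) :=
      (stirlingRemainder_succ_sub_le j).trans (by gcongr)
    have hsplit : (((j + 1 : ℕ) : ℝ) - i) / (i + 1) = (j - i) / (i + 1) + 1 / (i + 1) := by
      push_cast; ring
    linarith

lemma abs_stirlingRemainder_sub_le {i j : ℕ} {a : ℝ} (ha : 0 < a) (hi : a ≤ i + 1)
    (hj : a ≤ j + 1) : |stirlingRemainder i - stirlingRemainder j| ≤ |(i : ℝ) - j| / a := by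
  wlog hij : i ≤ j generalizing i j
  · rw [abs_sub_comm, abs_sub_comm (i : ℝ)]
    exact this hj hi (le_of_not_ge hij)
  have hij' : (0 : ℝ) ≤ j - i := sub_nonneg.2 (Nat.cast_le.2 hij)
  rw [abs_sub_comm, abs_of_nonneg (sub_nonneg.2 (stirlingRemainder_monotone hij)),
    abs_sub_comm (i : ℝ), abs_of_nonneg hij']
  exact (stirlingRemainder_sub_le hij).trans (by gcongr)

lemma log_choose {n k : ℕ} (hn : 1 ≤ n) (hk : k ≤ n) :
    log (n.choose k) = -(n * binEnt ((2 * k - n) / n)) +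
      (stirlingRemainder n - stirlingRemainder k - stirlingRemainder (n - k)) := by
  have hn' : (n : ℝ) ≠ 0 := by positivity
  have hentropy (j : ℕ) : n * ((j : ℝ) / n * log (j / n)) = j * log j - j * log n := by
    rcases j.eq_zero_or_pos with rfl | hj
    · simp
    · rw [log_div (by positivity) hn']
      field_simp
  have hup : (1 + (2 * (k : ℝ) - n) / n) / 2 = k / n := by field_simp; ring
  have hdown : (1 - (2 * (k : ℝ) - n) / n) / 2 = (n - k : ℕ) / n := by
    rw [Nat.cast_sub hk]; field_simp; ring
  rw [Nat.cast_choose ℝ hk, log_div (by positivity) (by positivity),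
    log_mul (by positivity) (by positivity), binEnt, hup, hdown, mul_add, hentropy, hentropy]
  simp only [stirlingRemainder, Nat.cast_sub hk]
  ring

/-! ### The standard normal distribution -/

lemma exists_one_add_pow_mul_exp_neg_le (N : ℕ) {a : ℝ} (ha : 0 < a) :
    ∃ C > 0, ∀ x ≥ 0, (1 + x) ^ N * exp (-(a * x)) ≤ C := by
  refine ⟨N.factorial * exp a / a ^ N, by positivity, fun x hx => ?_⟩
  have hseries := pow_div_factorial_le_exp (a * (1 + x)) (by positivity) N
  rw [div_le_iff₀ (by positivity), mul_pow, mul_one_add, exp_add] at hseries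
  rw [exp_neg, ← div_eq_mul_inv, div_le_div_iff₀ (by positivity) (by positivity)]
  linarith

lemma exists_one_add_abs_pow_mul_exp_neg_sq_le (N : ℕ) {a : ℝ} (ha : 0 < a) :
    ∃ C > 0, ∀ x : ℝ, (1 + |x|) ^ N * exp (-(a * x ^ 2)) ≤ C := by
  obtain ⟨C, hC, hdecay⟩ := exists_one_add_pow_mul_exp_neg_le N ha
  refine ⟨C * exp a, by positivity, fun x => ?_⟩
  have habs : |x| ≤ x ^ 2 + 1 := by
    rw [← sq_abs]; nlinarith [sq_nonneg (|x| - 1), abs_nonneg x]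
  calc (1 + |x|) ^ N * exp (-(a * x ^ 2)) ≤ (1 + |x|) ^ N * exp (-(a * |x|) + a) := by
        gcongr; nlinarith
    _ = (1 + |x|) ^ N * exp (-(a * |x|)) * exp a := by rw [exp_add]; ring
    _ ≤ C * exp a := by gcongr; exact hdecay |x| (abs_nonneg x)

lemma one_add_abs_le_mul {x t H : ℝ} (h : |t - x| ≤ H) : 1 + |x| ≤ (1 + H) * (1 + |t|) := by
  have htri : |x| - |t| ≤ |t - x| := abs_sub_comm x t ▸ abs_sub_abs_le_abs_sub x t
  nlinarith [abs_nonneg t, abs_nonneg (t - x)]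

lemma gaussianPDFReal_zero_one_apply (x : ℝ) :
    gaussianPDFReal 0 1 x = (√(2 * π))⁻¹ * exp (-(x ^ 2 / 2)) := by
  simp [gaussianPDFReal_def, neg_div]

lemma hasDerivAt_gaussianPDFReal_zero_one (x : ℝ) :
    HasDerivAt (gaussianPDFReal 0 1) (-(x * gaussianPDFReal 0 1 x)) x := by
  have hexponent : HasDerivAt (fun y : ℝ => -(y ^ 2 / 2)) (-x) x :=
    ((hasDerivAt_pow 2 x).div_const 2).neg.congr_deriv (by norm_num)
  rw [funext gaussianPDFReal_zero_one_apply]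
  exact (hexponent.exp.const_mul (√(2 * π))⁻¹).congr_deriv (by ring)

lemma exists_gaussianPDFReal_zero_one_le (N : ℕ) :
    ∃ C > 0, ∀ x : ℝ, gaussianPDFReal 0 1 x ≤ C / (1 + |x|) ^ N := by
  obtain ⟨C, hC, hdecay⟩ := exists_one_add_abs_pow_mul_exp_neg_sq_le N (a := 1 / 2) (by norm_num)
  refine ⟨(√(2 * π))⁻¹ * C, by positivity, fun x => ?_⟩
  rw [le_div_iff₀ (by positivity), gaussianPDFReal_zero_one_apply]
  calc (√(2 * π))⁻¹ * exp (-(x ^ 2 / 2)) * (1 + |x|) ^ N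
      = (√(2 * π))⁻¹ * ((1 + |x|) ^ N * exp (-(1 / 2 * x ^ 2))) := by ring_nf
    _ ≤ (√(2 * π))⁻¹ * C := by gcongr; exact hdecay x

lemma exists_abs_mul_gaussianPDFReal_zero_one_le (N : ℕ) :
    ∃ C > 0, ∀ x : ℝ, |x * gaussianPDFReal 0 1 x| ≤ C / (1 + |x|) ^ N := by
  obtain ⟨C, hC, hdecay⟩ := exists_gaussianPDFReal_zero_one_le (N + 1)
  refine ⟨C, hC, fun x => ?_⟩
  have hφ := gaussianPDFReal_nonneg 0 1 x
  calc |x * gaussianPDFReal 0 1 x| = |x| * gaussianPDFReal 0 1 x := by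
        rw [abs_mul, abs_of_nonneg hφ]
    _ ≤ (1 + |x|) * (C / (1 + |x|) ^ (N + 1)) := by gcongr; exacts [by linarith, hdecay x]
    _ = C / (1 + |x|) ^ N := by rw [pow_succ]; field_simp

lemma stdNormalCDF_eq_cdf : stdNormalCDF = cdf (gaussianReal 0 1) :=
  funext fun z => (cdf_eq_real (gaussianReal 0 1) z).symm

lemma stdNormalCDF_monotone : Monotone stdNormalCDF :=
  stdNormalCDF_eq_cdf ▸ monotone_cdf _

lemma stdNormalCDF_nonneg (z : ℝ) : 0 ≤ stdNormalCDF z :=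
  stdNormalCDF_eq_cdf ▸ cdf_nonneg _ z

lemma stdNormalCDF_neg (z : ℝ) : stdNormalCDF (-z) = 1 - stdNormalCDF z := by
  have hsymm : (gaussianReal 0 1).map (fun x => -x) = gaussianReal 0 1 := by
    rw [gaussianReal_map_neg, neg_zero]
  have hpre : (fun x : ℝ => -x) ⁻¹' Set.Iic (-z) = Set.Ici z := by
    ext x; simp
  calc stdNormalCDF (-z) = ((gaussianReal 0 1).map (fun x => -x)).real (Set.Iic (-z)) := by
        rw [hsymm]; rfl
    _ = (gaussianReal 0 1).real (Set.Ici z) := by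
        rw [map_measureReal_apply measurable_neg measurableSet_Iic, hpre]
    _ = (gaussianReal 0 1).real (Set.Iic z)ᶜ := by
        have := nullSingletonClass_gaussianReal (μ := 0) (v := 1) one_ne_zero
        rw [Set.compl_Iic]
        exact measureReal_congr Ioi_ae_eq_Ici.symm
    _ = 1 - stdNormalCDF z := probReal_compl_eq_one_sub measurableSet_Iic

lemma hasDerivAt_stdNormalCDF (z : ℝ) :
    HasDerivAt stdNormalCDF (gaussianPDFReal 0 1 z) z := by
  have hintegral (u : ℝ) : stdNormalCDF u = ∫ x in Set.Iic u, gaussianPDFReal 0 1 x := by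
    rw [stdNormalCDF, gaussianReal_apply_eq_integral 0 one_ne_zero,
      ENNReal.toReal_ofReal (integral_nonneg (gaussianPDFReal_nonneg 0 1))]
  have hintegrable (s : Set ℝ) : IntegrableOn (gaussianPDFReal 0 1) s :=
    (integrable_gaussianPDFReal 0 1).integrableOn
  have hftc : stdNormalCDF =
      fun u => stdNormalCDF 0 + ∫ x in (0 : ℝ)..u, gaussianPDFReal 0 1 x := by
    ext u
    rw [← intervalIntegral.integral_Iic_sub_Iic (hintegrable _) (hintegrable _), hintegral,
      hintegral]
    ring
  have hcont : Continuous (gaussianPDFReal 0 1) :=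
    continuous_iff_continuousAt.2 fun x => (hasDerivAt_gaussianPDFReal_zero_one x).continuousAt
  rw [hftc]
  exact (hcont.integral_hasStrictDerivAt 0 z).hasDerivAt.const_add _

lemma stdNormalCDF_le_exp {z : ℝ} (hz : z ≤ 0) : stdNormalCDF z ≤ exp (-(1 / 2 * z ^ 2)) := by
  have hchernoff := measure_le_le_exp_mul_mgf (X := id) (μ := gaussianReal 0 1) (t := z) z hz
    (integrable_exp_mul_gaussianReal z)
  rw [mgf_id_gaussianReal, ← exp_add] at hchernoff
  calc stdNormalCDF z ≤ exp (-z * z + (0 * z + (1 : NNReal) * z ^ 2 / 2)) := hchernoff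
    _ = exp (-(1 / 2 * z ^ 2)) := by congr 1; push_cast; ring

lemma exists_stdNormalCDF_le_of_nonpos :
    ∃ C > 0, ∀ z ≤ 0, stdNormalCDF z ≤ C / (1 + |z|) ^ 2 := by
  obtain ⟨C, hC, hdecay⟩ := exists_one_add_abs_pow_mul_exp_neg_sq_le 2 (a := 1 / 2) (by norm_num)
  refine ⟨C, hC, fun z hz => ?_⟩
  rw [le_div_iff₀' (by positivity)]
  exact (mul_le_mul_of_nonneg_left (stdNormalCDF_le_exp hz) (by positivity)).trans (hdecay z)

lemma abs_sub_sub_mul_le_of_hasDerivAt {f f' f'' : ℝ → ℝ} {x h M : ℝ} (hh : 0 ≤ h)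
    (hf : ∀ t ∈ Set.Icc x (x + h), HasDerivAt f (f' t) t)
    (hf' : ∀ t ∈ Set.Icc x (x + h), HasDerivAt f' (f'' t) t)
    (hM : ∀ t ∈ Set.Icc x (x + h), |f'' t| ≤ M) :
    |f (x + h) - f x - h * f' x| ≤ M * h ^ 2 := by
  have hx : x ∈ Set.Icc x (x + h) := Set.left_mem_Icc.2 (by linarith)
  have hxh : x + h ∈ Set.Icc x (x + h) := Set.right_mem_Icc.2 (by linarith)
  have hM0 : 0 ≤ M := (abs_nonneg _).trans (hM x hx)
  have hslope : ∀ t ∈ Set.Icc x (x + h), ‖f' t - f' x‖ ≤ M * h := fun t ht =>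
    (Convex.norm_image_sub_le_of_norm_hasDerivWithin_le
      (fun s hs => (hf' s hs).hasDerivWithinAt) hM (convex_Icc _ _) hx ht).trans <| by
        rw [Real.norm_of_nonneg (sub_nonneg.2 ht.1)]
        gcongr
        linarith [ht.2]
  have hmain := Convex.norm_image_sub_le_of_norm_hasDerivWithin_le (f := fun t => f t - t * f' x)
    (fun t ht => ((hf t ht).sub ((hasDerivAt_id t).mul_const (f' x))).hasDerivWithinAt)
    (fun t ht => by simpa using hslope t ht) (convex_Icc _ _) hx hxh
  rw [add_sub_cancel_left, Real.norm_of_nonneg hh, Real.norm_eq_abs] at hmain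
  calc |f (x + h) - f x - h * f' x| = |f (x + h) - (x + h) * f' x - (f x - x * f' x)| := by
        congr 1; ring
    _ ≤ M * h * h := hmain
    _ = M * h ^ 2 := by ring

lemma exists_stdNormalCDF_cell_le (H : ℝ) : ∃ C > 0, ∀ x h : ℝ, 0 ≤ h → h ≤ H →
    |stdNormalCDF (x + h) - stdNormalCDF x - h * gaussianPDFReal 0 1 x| ≤
      C * h ^ 2 / (1 + |x|) ^ 2 := by
  obtain ⟨C, hC, hdecay⟩ := exists_abs_mul_gaussianPDFReal_zero_one_le 2
  refine ⟨C * (1 + |H|) ^ 2, by positivity, fun x h h0 hh => ?_⟩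
  have hderiv : ∀ t ∈ Set.Icc x (x + h),
      |-(t * gaussianPDFReal 0 1 t)| ≤ C * (1 + |H|) ^ 2 / (1 + |x|) ^ 2 := fun t ht => by
    have hdist : |t - x| ≤ |H| := by
      rw [abs_of_nonneg (sub_nonneg.2 ht.1)]
      linarith [ht.2, le_abs_self H]
    rw [abs_neg]
    refine (hdecay t).trans ?_
    rw [div_le_div_iff₀ (by positivity) (by positivity), mul_assoc, ← mul_pow]
    gcongr
    exact one_add_abs_le_mul hdist
  refine (abs_sub_sub_mul_le_of_hasDerivAt h0 (fun t _ => hasDerivAt_stdNormalCDF t)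
    (fun t _ => hasDerivAt_gaussianPDFReal_zero_one t) hderiv).trans_eq ?_
  ring

/-! ### Gaussian weights on a lattice -/

/-- The weights `u 0, …, u n` approximate the masses `h φ(x₀ + h k)` that the standard normal
density `φ` gives to the cells of a lattice of mesh `h`, to second order in `h` and with a quadratic
decay in the lattice point. -/
def IsGaussianOnLattice (B x₀ h : ℝ) (n : ℕ) (u : ℕ → ℝ) : Prop :=
  ∀ k ≤ n, |u k - h * gaussianPDFReal 0 1 (x₀ + h * k)| ≤ B * h ^ 2 / (1 + |x₀ + h * k|) ^ 2

lemma IsGaussianOnLattice.reflect {B x₀ h : ℝ} {n : ℕ} {u : ℕ → ℝ}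
    (hu : IsGaussianOnLattice B x₀ h n u) :
    IsGaussianOnLattice B (-(x₀ + h * n)) h n fun k => u (n - k) := by
  intro k hk
  have hpoint : -(x₀ + h * n) + h * k = -(x₀ + h * (n - k : ℕ)) := by
    rw [Nat.cast_sub hk]; ring
  rw [hpoint, abs_neg, gaussianPDFReal_zero_one_apply, neg_sq, ← gaussianPDFReal_zero_one_apply]
  exact hu (n - k) (n.sub_le k)

lemma sum_range_div_one_add_abs_sq_le {x₀ h H : ℝ} (hh : 0 < h) (hH : h ≤ H) :
    ∀ (j : ℕ) {z : ℝ}, z ≤ 0 → (∀ k < j, x₀ + h * k ≤ z) →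
      ∑ k ∈ Finset.range j, h / (1 + |x₀ + h * k|) ^ 2 ≤ (1 + H) / (1 + |z|)
  | 0, _, _, _ => by
    have : 0 < H := hh.trans_le hH
    rw [Finset.sum_range_zero]
    positivity
  | j + 1, z, hz, hj => by
    set y := x₀ + h * j
    have hyz : y ≤ z := hj j j.lt_succ_self
    have hprev : ∀ k < j, x₀ + h * k ≤ y - h := fun k hk => by
      have : (k : ℝ) + 1 ≤ j := by exact_mod_cast hk
      simp only [y]; nlinarith
    have ih := sum_range_div_one_add_abs_sq_le hh hH j (by linarith) hprev
    rw [Finset.sum_range_succ]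
    rw [abs_of_nonpos (show y - h ≤ 0 by linarith)] at ih
    change _ + h / (1 + |y|) ^ 2 ≤ _
    rw [abs_of_nonpos (hyz.trans hz), abs_of_nonpos hz]
    have hy : 0 < 1 + -y := by linarith
    have htelescope : h / (1 + -y) ^ 2 ≤ (1 + H) / (1 + -y) - (1 + H) / (1 + -(y - h)) := by
      rw [div_sub_div _ _ hy.ne' (by linarith), div_le_div_iff₀ (by positivity)
        (mul_pos hy (by linarith))]
      have : 1 + -(y - h) ≤ (1 + H) * (1 + -y) := by nlinarith
      have := mul_le_mul_of_nonneg_left this (show 0 ≤ h * (1 + -y) by positivity)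
      nlinarith
    have hlast : (1 + H) / (1 + -y) ≤ (1 + H) / (1 + -z) := by
      have : 0 < H := hh.trans_le hH
      gcongr
      linarith
    linarith

lemma exists_abs_sum_range_sub_stdNormalCDF_sub_le (H B : ℝ) :
    ∃ C > 0, ∀ {x₀ h : ℝ} {n j : ℕ} {u : ℕ → ℝ}, 0 < h → h ≤ H → IsGaussianOnLattice B x₀ h n u →
      j ≤ n + 1 →
      |∑ k ∈ Finset.range j, u k - (stdNormalCDF (x₀ + h * j) - stdNormalCDF x₀)| ≤
        C * h * ∑ k ∈ Finset.range j, h / (1 + |x₀ + h * k|) ^ 2 := by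
  obtain ⟨C, hC, hcell⟩ := exists_stdNormalCDF_cell_le H
  refine ⟨|B| + C, by positivity, fun {x₀ h n j u} h0 hh hu hj => ?_⟩
  have htelescope : stdNormalCDF (x₀ + h * j) - stdNormalCDF x₀ = ∑ k ∈ Finset.range j,
      (stdNormalCDF (x₀ + h * k + h) - stdNormalCDF (x₀ + h * k)) := by
    have := Finset.sum_range_sub (fun k : ℕ => stdNormalCDF (x₀ + h * k)) j
    simp only [Nat.cast_succ, Nat.cast_zero, mul_zero, add_zero, mul_add_one, ← add_assoc] at this
    exact this.symm
  rw [htelescope, ← Finset.sum_sub_distrib, Finset.mul_sum]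
  refine (Finset.abs_sum_le_sum_abs _ _).trans (Finset.sum_le_sum fun k hk => ?_)
  have hk' : k ≤ n := by have := Finset.mem_range.1 hk; lia
  set x := x₀ + h * k
  calc |u k - (stdNormalCDF (x + h) - stdNormalCDF x)|
      ≤ |u k - h * gaussianPDFReal 0 1 x|
        + |h * gaussianPDFReal 0 1 x - (stdNormalCDF (x + h) - stdNormalCDF x)| :=
        abs_sub_le _ _ _
    _ ≤ |B| * h ^ 2 / (1 + |x|) ^ 2 + C * h ^ 2 / (1 + |x|) ^ 2 := by
        refine add_le_add ((hu k hk').trans ?_) (abs_sub_comm _ (h * _) ▸ hcell x h h0.le hh)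
        gcongr
        exact le_abs_self B
    _ = (|B| + C) * h * (h / (1 + |x|) ^ 2) := by ring

lemma exists_stdNormalCDF_le_of_mul_le {c : ℝ} (hc : 0 < c) :
    ∃ C > 0, ∀ {y z h : ℝ}, 0 < h → z ≤ 0 → y ≤ z → h * y ≤ -c →
      stdNormalCDF y ≤ C * h / (1 + |z|) := by
  obtain ⟨C, hC, htail⟩ := exists_stdNormalCDF_le_of_nonpos
  refine ⟨C / c, by positivity, fun {y z h} hh hz hyz hy => ?_⟩
  refine (htail y (hyz.trans hz)).trans ?_
  rw [abs_of_nonpos hz, abs_of_nonpos (hyz.trans hz), div_le_div_iff₀ (by nlinarith) (by linarith)]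
  have hsq : c * (1 + -z) ≤ h * (1 + -y) ^ 2 := by nlinarith
  calc C * (1 + -z) = C / c * (c * (1 + -z)) := by field_simp
    _ ≤ C / c * (h * (1 + -y) ^ 2) := by gcongr
    _ = C / c * h * (1 + -y) ^ 2 := by ring

lemma exists_stdNormalCDF_add_sub_le (H : ℝ) :
    ∃ C > 0, ∀ {z h : ℝ}, 0 < h → h ≤ H →
      stdNormalCDF (z + h) - stdNormalCDF z ≤ C * h / (1 + |z|) := by
  obtain ⟨C, hC, hcell⟩ := exists_stdNormalCDF_cell_le H
  obtain ⟨D, hD, hdecay⟩ := exists_gaussianPDFReal_zero_one_le 1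
  refine ⟨C * |H| + D, by positivity, fun {z h} h0 hh => ?_⟩
  have hquadratic : C * h ^ 2 / (1 + |z|) ^ 2 ≤ C * |H| * h / (1 + |z|) := by
    rw [show C * |H| * h = C * (|H| * h) by ring, sq h]
    gcongr
    · exact hh.trans (le_abs_self H)
    · exact le_self_pow₀ (by linarith [abs_nonneg z]) two_ne_zero
  have hdensity : h * gaussianPDFReal 0 1 z ≤ D * h / (1 + |z|) := by
    rw [mul_comm D, mul_div_assoc, ← pow_one (1 + |z|)]
    gcongr
    exact hdecay z
  rw [add_mul, add_div]
  linarith [(abs_le.1 (hcell z h h0.le hh)).2]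

/-- Cells telescope, and the mass of the half-line below `x₀` is negligible because
`h x₀ ≤ -c` puts `x₀` at distance of order `1 / h` from the origin. -/
lemma exists_abs_sum_range_sub_stdNormalCDF_le (H B : ℝ) {c : ℝ} (hc : 0 < c) :
    ∃ C > 0, ∀ {x₀ h z : ℝ} {n j : ℕ} {u : ℕ → ℝ}, 0 < h → h ≤ H → h * x₀ ≤ -c →
      IsGaussianOnLattice B x₀ h n u → z ≤ 0 → j ≤ n + 1 → (∀ k < j, x₀ + h * k ≤ z) →
      z ≤ x₀ + h * j → |∑ k ∈ Finset.range j, u k - stdNormalCDF z| ≤ C * h / (1 + |z|) := by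
  obtain ⟨C₁, hC₁, hcells⟩ := exists_abs_sum_range_sub_stdNormalCDF_sub_le H B
  obtain ⟨C₂, hC₂, hlast⟩ := exists_stdNormalCDF_add_sub_le H
  obtain ⟨C₃, hC₃, htail⟩ := exists_stdNormalCDF_le_of_mul_le hc
  refine ⟨C₁ * (1 + |H|) + C₂ + C₃, by positivity,
    fun {x₀ h z n j u} h0 hh hx₀ hu hz hjn hj hzj => ?_⟩
  rcases j.eq_zero_or_pos with rfl | hjpos
  · have hz₀ : h * z ≤ -c := by
      rw [Nat.cast_zero, mul_zero, add_zero] at hzj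
      nlinarith
    rw [Finset.sum_range_zero, zero_sub, abs_neg, abs_of_nonneg (stdNormalCDF_nonneg z)]
    refine (htail h0 hz le_rfl hz₀).trans ?_
    gcongr
    exact le_add_of_nonneg_left (by positivity)
  have herrors : C₁ * h * ∑ k ∈ Finset.range j, h / (1 + |x₀ + h * k|) ^ 2 ≤
      C₁ * (1 + |H|) * h / (1 + |z|) :=
    calc C₁ * h * ∑ k ∈ Finset.range j, h / (1 + |x₀ + h * k|) ^ 2
        ≤ C₁ * h * ((1 + |H|) / (1 + |z|)) := by
          gcongr
          exact sum_range_div_one_add_abs_sq_le h0 (hh.trans (le_abs_self H)) j hz hj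
      _ = C₁ * (1 + |H|) * h / (1 + |z|) := by ring
  have hxj : x₀ + h * j ≤ z + h := by
    have := hj (j - 1) (by lia)
    rw [Nat.cast_pred hjpos] at this
    linarith
  have hx₀z : x₀ ≤ z := by simpa using hj 0 hjpos
  have hcells := (hcells h0 hh hu hjn).trans herrors
  have hlast := (sub_le_sub_right (stdNormalCDF_monotone hxj) _).trans (hlast h0 hh)
  have htail := htail h0 hz hx₀z hx₀
  have hmono := stdNormalCDF_monotone hzj
  have hnonneg := stdNormalCDF_nonneg x₀
  have hpos₁ : 0 ≤ C₂ * h / (1 + |z|) := by positivity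
  have hpos₂ : 0 ≤ C₃ * h / (1 + |z|) := by positivity
  rw [add_mul, add_mul, add_div, add_div]
  rw [abs_le] at hcells ⊢
  constructor <;> linarith

lemma exists_cut_of_monotone {x : ℕ → ℝ} (hx : Monotone x) (z : ℝ) (N : ℕ) :
    ∃ j ≤ N, (∀ k < N, x k ≤ z ↔ k < j) := by
  classical
  by_cases h : ∃ k < N, z < x k
  · refine ⟨Nat.find h, (Nat.find_spec h).1.le, fun k hk => ⟨fun hkz => ?_, fun hkj => ?_⟩⟩
    · by_contra! hle
      exact (hkz.trans_lt ((Nat.find_spec h).2.trans_le (hx hle))).false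
    · by_contra! hlt
      exact Nat.find_min h hkj ⟨hk, hlt⟩
  · push Not at h
    exact ⟨N, le_rfl, fun k hk => ⟨fun _ => hk, fun _ => h k hk⟩⟩

lemma exists_abs_sum_Ico_sub_stdNormalCDF_neg_le (H B : ℝ) {c : ℝ} (hc : 0 < c) :
    ∃ C > 0, ∀ {x₀ h z : ℝ} {n j : ℕ} {u : ℕ → ℝ}, 0 < h → h ≤ H → c ≤ h * (x₀ + h * n) →
      IsGaussianOnLattice B x₀ h n u → 0 ≤ z → j ≤ n + 1 →
      (∀ k ≤ n, j ≤ k → z ≤ x₀ + h * k) → x₀ + h * j ≤ z + h →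
      |∑ k ∈ Finset.Ico j (n + 1), u k - stdNormalCDF (-z)| ≤ C * h / (1 + |z|) := by
  obtain ⟨C, hC, hlower⟩ := exists_abs_sum_range_sub_stdNormalCDF_le H B hc
  refine ⟨C, hC, fun {x₀ h z n j u} h0 hh hxn hu hz hjn hj hzj => ?_⟩
  have hreflect : ∑ k ∈ Finset.Ico j (n + 1), u k =
      ∑ k ∈ Finset.range (n + 1 - j), u (n - k) := by
    have := Finset.sum_Ico_reflect u 0 (show n + 1 - j ≤ n + 1 by lia)
    rw [Finset.range_eq_Ico, this]
    congr 2; lia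
  rw [hreflect, ← abs_neg z]
  refine hlower h0 hh (by linarith) hu.reflect (by linarith) (by lia) (fun k hk => ?_) ?_
  · have := hj (n - k) (n.sub_le k) (by lia)
    rw [Nat.cast_sub (by lia)] at this
    linarith
  · rw [Nat.cast_sub hjn]
    push_cast
    linarith

/-- The total weight at the lattice points `x₀ + h k ≤ z` with `k ≤ n`. -/
noncomputable def latticeCDF (x₀ h : ℝ) (n : ℕ) (u : ℕ → ℝ) (z : ℝ) : ℝ :=
  ∑ k ∈ (Finset.range (n + 1)).filter (fun k : ℕ => x₀ + h * k ≤ z), u k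

lemma monotone_add_mul_natCast (x₀ : ℝ) {h : ℝ} (hh : 0 ≤ h) :
    Monotone fun k : ℕ => x₀ + h * k :=
  fun _ _ hij => by dsimp only; gcongr

lemma exists_latticeCDF_eq_sum_range (x₀ : ℝ) {h : ℝ} (hh : 0 ≤ h) (n : ℕ) (u : ℕ → ℝ) (z : ℝ) :
    ∃ j ≤ n + 1, (∀ k ≤ n, x₀ + h * k ≤ z ↔ k < j) ∧
      latticeCDF x₀ h n u z = ∑ k ∈ Finset.range j, u k := by
  obtain ⟨j, hjn, hj⟩ := exists_cut_of_monotone (monotone_add_mul_natCast x₀ hh) z (n + 1)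
  refine ⟨j, hjn, fun k hk => hj k (by lia), Finset.sum_congr ?_ fun _ _ => rfl⟩
  ext k
  simp only [Finset.mem_filter, Finset.mem_range]
  exact ⟨fun ⟨hk, hkz⟩ => (hj k hk).1 hkz, fun hk => ⟨by lia, (hj k (by lia)).2 hk⟩⟩

lemma exists_abs_latticeCDF_sub_le_of_nonpos (H B : ℝ) {c : ℝ} (hc : 0 < c) :
    ∃ C > 0, ∀ {x₀ h z : ℝ} {n : ℕ} {u : ℕ → ℝ}, 0 < h → h ≤ H → h * x₀ ≤ -c →
      c ≤ h * (x₀ + h * n) → IsGaussianOnLattice B x₀ h n u → z ≤ 0 →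
      |latticeCDF x₀ h n u z - stdNormalCDF z| ≤ C * h / (1 + |z|) := by
  obtain ⟨C, hC, hlower⟩ := exists_abs_sum_range_sub_stdNormalCDF_le H B hc
  refine ⟨C, hC, fun {x₀ h z n u} h0 hh hx₀ hxn hu hz => ?_⟩
  obtain ⟨j, hjn, hcut, hsum⟩ := exists_latticeCDF_eq_sum_range x₀ h0.le n u z
  have hxn_pos : 0 < x₀ + h * n := pos_of_mul_pos_right (hc.trans_le hxn) h0.le
  have hjn' : j ≤ n := by
    by_contra! hlt
    linarith [(hcut n le_rfl).2 hlt]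
  rw [hsum]
  refine hlower h0 hh hx₀ hu hz hjn (fun k hk => (hcut k (by lia)).2 hk) ?_
  exact (not_le.1 fun hle => lt_irrefl j ((hcut j hjn').1 hle)).le

lemma exists_abs_sum_sub_latticeCDF_sub_le_of_nonneg (H B : ℝ) {c : ℝ} (hc : 0 < c) :
    ∃ C > 0, ∀ {x₀ h z : ℝ} {n : ℕ} {u : ℕ → ℝ}, 0 < h → h ≤ H → h * x₀ ≤ -c →
      c ≤ h * (x₀ + h * n) → IsGaussianOnLattice B x₀ h n u → 0 ≤ z →
      |∑ k ∈ Finset.range (n + 1), u k - latticeCDF x₀ h n u z - stdNormalCDF (-z)| ≤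
        C * h / (1 + |z|) := by
  obtain ⟨C, hC, hupper⟩ := exists_abs_sum_Ico_sub_stdNormalCDF_neg_le H B hc
  refine ⟨C, hC, fun {x₀ h z n u} h0 hh hx₀ hxn hu hz => ?_⟩
  obtain ⟨j, hjn, hcut, hsum⟩ := exists_latticeCDF_eq_sum_range x₀ h0.le n u z
  have hx₀_neg : x₀ < 0 := neg_of_mul_neg_right (hx₀.trans_lt (neg_lt_zero.2 hc)) h0.le
  have hjpos : 0 < j := (hcut 0 n.zero_le).1 (by rw [Nat.cast_zero]; linarith)
  rw [hsum, ← Finset.sum_Ico_eq_sub u hjn]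
  refine hupper h0 hh hxn hu hz hjn (fun k hk hjk => ?_) ?_
  · exact (not_le.1 fun hle => ((hcut k hk).1 hle).not_ge hjk).le
  · have := (hcut (j - 1) (by lia)).2 (by lia)
    rw [Nat.cast_pred hjpos] at this
    linarith

lemma exists_abs_sum_sub_one_le (H B : ℝ) {c : ℝ} (hc : 0 < c) :
    ∃ C > 0, ∀ {x₀ h : ℝ} {n : ℕ} {u : ℕ → ℝ}, 0 < h → h ≤ H → h * x₀ ≤ -c →
      c ≤ h * (x₀ + h * n) → IsGaussianOnLattice B x₀ h n u →
      |∑ k ∈ Finset.range (n + 1), u k - 1| ≤ C * h := by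
  obtain ⟨C₁, hC₁, hleft⟩ := exists_abs_latticeCDF_sub_le_of_nonpos H B hc
  obtain ⟨C₂, hC₂, hright⟩ := exists_abs_sum_sub_latticeCDF_sub_le_of_nonneg H B hc
  refine ⟨C₁ + C₂, by positivity, fun {x₀ h n u} h0 hh hx₀ hxn hu => ?_⟩
  have hleft := hleft h0 hh hx₀ hxn hu le_rfl
  have hright := hright h0 hh hx₀ hxn hu le_rfl
  rw [stdNormalCDF_neg, abs_zero, add_zero, div_one] at hright
  rw [abs_zero, add_zero, div_one] at hleft
  rw [abs_le] at hleft hright ⊢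
  constructor <;> linarith

lemma exists_abs_latticeCDF_sub_mul_le (H B : ℝ) {c : ℝ} (hc : 0 < c) :
    ∃ C > 0, ∀ {x₀ h : ℝ} {n : ℕ} {u : ℕ → ℝ}, 0 < h → h ≤ H → h * x₀ ≤ -c →
      c ≤ h * (x₀ + h * n) → IsGaussianOnLattice B x₀ h n u → ∀ z,
      |latticeCDF x₀ h n u z - (∑ k ∈ Finset.range (n + 1), u k) * stdNormalCDF z| ≤
        C * h / (1 + |z|) := by
  obtain ⟨C₁, hC₁, htotal⟩ := exists_abs_sum_sub_one_le H B hc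
  obtain ⟨C₂, hC₂, hleft⟩ := exists_abs_latticeCDF_sub_le_of_nonpos H B hc
  obtain ⟨C₃, hC₃, hright⟩ := exists_abs_sum_sub_latticeCDF_sub_le_of_nonneg H B hc
  obtain ⟨C₄, hC₄, htail⟩ := exists_stdNormalCDF_le_of_nonpos
  refine ⟨C₂ + C₃ + C₁ * C₄, by positivity, fun {x₀ h n u} h0 hh hx₀ hxn hu z => ?_⟩
  have htotal := htotal h0 hh hx₀ hxn hu
  set U := ∑ k ∈ Finset.range (n + 1), u k
  set F := latticeCDF x₀ h n u z
  have hmass (t : ℝ) (ht0 : 0 ≤ t) (ht : t ≤ C₄ / (1 + |z|) ^ 2) :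
      |t * (U - 1)| ≤ C₁ * C₄ * h / (1 + |z|) :=
    calc |t * (U - 1)| ≤ C₄ / (1 + |z|) * (C₁ * h) := by
          rw [abs_mul, abs_of_nonneg ht0]
          gcongr
          exact ht.trans <| by
            gcongr
            exact le_self_pow₀ (by linarith [abs_nonneg z]) two_ne_zero
      _ = C₁ * C₄ * h / (1 + |z|) := by ring
  have hpos₂ : 0 ≤ C₂ * h / (1 + |z|) := by positivity
  have hpos₃ : 0 ≤ C₃ * h / (1 + |z|) := by positivity
  rw [add_mul, add_mul, add_div, add_div]
  rcases le_total z 0 with hz | hz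
  · have hΦ := hmass (stdNormalCDF z) (stdNormalCDF_nonneg z) (htail z hz)
    rw [show F - U * stdNormalCDF z = (F - stdNormalCDF z) - stdNormalCDF z * (U - 1) by ring]
    linarith [hleft h0 hh hx₀ hxn hu hz, abs_sub (F - stdNormalCDF z) (stdNormalCDF z * (U - 1))]
  · have hΦ := hmass (stdNormalCDF (-z)) (stdNormalCDF_nonneg (-z)) <| by
      rw [← abs_neg]
      exact htail (-z) (neg_nonpos.2 hz)
    rw [show F - U * stdNormalCDF z = stdNormalCDF (-z) * (U - 1) -
      (U - F - stdNormalCDF (-z)) by rw [stdNormalCDF_neg]; ring]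
    linarith [hright h0 hh hx₀ hxn hu hz,
      abs_sub (stdNormalCDF (-z) * (U - 1)) (U - F - stdNormalCDF (-z))]

/-! ### The free energy near and away from its minimizer -/

lemma exists_abs_sub_taylor_le {f : ℝ → ℝ} {m : ℝ} {n : ℕ} (hf : ContDiffAt ℝ (n + 1) f m) :
    ∃ δ > 0, ∃ L > 0, ∀ y, |y - m| ≤ δ →
      |f y - ∑ k ∈ Finset.range (n + 1), iteratedDeriv k f m / k.factorial * (y - m) ^ k| ≤
        L * |y - m| ^ (n + 1) := by
  obtain ⟨V, hV, hfV⟩ := hf.contDiffOn le_rfl (by simp)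
  have hcont : ContinuousAt (fun t => |iteratedDeriv (n + 1) f t|) m := by
    simpa only [norm_iteratedFDeriv_eq_norm_iteratedDeriv, norm_eq_abs] using
      (hf.continuousAt_iteratedFDeriv (k := n + 1) le_rfl).norm
  have hbdd := hcont.eventually_le_const (lt_add_one _)
  set M := |iteratedDeriv (n + 1) f m| + 1
  obtain ⟨δ, hδ, hball⟩ := Metric.eventually_nhds_iff_ball.1 (hbdd.and hV)
  refine ⟨δ / 2, by positivity, M / (n + 1).factorial, by positivity, fun y hy => ?_⟩
  rcases eq_or_ne m y with rfl | hmy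
  · simp [Finset.sum_range_succ']
  have hsub : Set.uIcc m y ⊆ Metric.ball m δ := fun t ht => by
    have := (Set.abs_sub_left_of_mem_uIcc ht).trans hy
    rw [Metric.mem_ball, Real.dist_eq]
    linarith
  have hfI : ContDiffOn ℝ (n + 1) f (Set.uIcc m y) := hfV.mono fun t ht => (hball t (hsub ht)).2
  obtain ⟨t, ht, hremainder⟩ := taylor_mean_remainder_lagrange_iteratedDeriv hmy hfI
  have htaylor : taylorWithinEval f n (Set.uIcc m y) m y =
      ∑ k ∈ Finset.range (n + 1), iteratedDeriv k f m / k.factorial * (y - m) ^ k := by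
    rw [taylor_within_apply]
    refine Finset.sum_congr rfl fun k hk => ?_
    have hk' : (k : WithTop ℕ∞) ≤ n + 1 := by
      exact_mod_cast (Finset.mem_range.1 hk).le
    rw [iteratedDerivWithin_eq_iteratedDeriv (uniqueDiffOn_uIcc hmy) (hf.of_le hk')
      Set.left_mem_uIcc, smul_eq_mul]
    ring
  rw [← htaylor, hremainder, abs_div, abs_mul, abs_pow, Nat.abs_cast, mul_div_right_comm]
  gcongr
  exact (hball t (hsub (Set.uIoo_subset_uIcc_self ht))).1

lemma exists_abs_sub_sq_le_of_isLocalMin {f : ℝ → ℝ} {m : ℝ} (hf : ContDiffAt ℝ 3 f m)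
    (hmin : IsLocalMin f m) :
    ∃ δ > 0, ∃ L > 0, ∀ y, |y - m| ≤ δ →
      |f y - f m - iteratedDeriv 2 f m / 2 * (y - m) ^ 2| ≤ L * |y - m| ^ 3 := by
  obtain ⟨δ, hδ, L, hL, htaylor⟩ := exists_abs_sub_taylor_le (n := 2) (by exact_mod_cast hf)
  refine ⟨δ, hδ, L, hL, fun y hy => ?_⟩
  simpa [Finset.sum_range_succ, hmin.deriv_eq_zero, sub_add_eq_sub_sub] using htaylor y hy

lemma exists_add_le_of_isCompact_of_lt {X : Type*} [MetricSpace X] {s : Set X} {f : X → ℝ}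
    {m : X} (hs : IsCompact s) (hf : ContinuousOn f s) (hm : ∀ y ∈ s, y ≠ m → f m < f y) {δ : ℝ}
    (hδ : 0 < δ) : ∃ η > 0, ∀ y ∈ s, δ ≤ dist y m → f m + η ≤ f y := by
  have hclosed : IsClosed {y | δ ≤ dist y m} := isClosed_le continuous_const (by fun_prop)
  rcases (s ∩ {y | δ ≤ dist y m}).eq_empty_or_nonempty with hempty | hne
  · exact ⟨1, one_pos, fun y hy hyδ => (hempty.subset ⟨hy, hyδ⟩).elim⟩
  obtain ⟨y₀, ⟨hy₀, hy₀δ⟩, hle⟩ :=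
    (hs.inter_right hclosed).exists_isMinOn hne (hf.mono Set.inter_subset_left)
  have hy₀m : y₀ ≠ m := dist_pos.1 (hδ.trans_le hy₀δ)
  refine ⟨f y₀ - f m, sub_pos.2 (hm y₀ hy₀ hy₀m), fun y hy hyδ => ?_⟩
  rw [add_sub_cancel]
  exact hle ⟨hy, hyδ⟩

lemma binEnt_eq_neg_binEntropy (y : ℝ) : binEnt y = -binEntropy ((1 + y) / 2) := by
  have hdual : 1 - (1 + y) / 2 = (1 - y) / 2 := by ring
  rw [binEnt, binEntropy_eq_negMulLog_add_negMulLog_one_sub, hdual, negMulLog, negMulLog]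
  ring

lemma continuous_binEnt : Continuous binEnt := by
  rw [funext binEnt_eq_neg_binEntropy]
  fun_prop

lemma contDiffAt_binEnt {n : WithTop ℕ∞} {y : ℝ} (hy : y ∈ Set.Ioo (-1 : ℝ) 1) :
    ContDiffAt ℝ n binEnt y := by
  have hdown : (1 - y) / 2 ≠ 0 := by linarith [hy.2]
  have hup : (1 + y) / 2 ≠ 0 := by linarith [hy.1]
  unfold binEnt
  fun_prop (disch := assumption)

/-- The free energy `I - g` of the mean-field model with interaction `g`. -/
noncomputable def freeEnergy (g : ℝ → ℝ) (y : ℝ) : ℝ :=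
  binEnt y - g y

lemma phiKJ_eq_freeEnergy (K J : ℝ) :
    phiKJ K J = freeEnergy fun y => K / 3 * y ^ 3 + J / 2 * y ^ 2 :=
  funext fun _ => sub_sub _ _ _

/-! ### The local limit theorem -/

/-- The magnetization per particle of a configuration of `n` spins, `k` of which are up. -/
noncomputable def magLevel (n k : ℕ) : ℝ :=
  (2 * k - n) / n

/-- The normalized magnetization `(2 * k - n - n * m) / √(n / D)` of a configuration of `n` spins,
`k` of which are up. -/
noncomputable def scaledMag (D m : ℝ) (n k : ℕ) : ℝ :=
  √D * √n * (magLevel n k - m)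

/-- A number of up-spins whose magnetization per particle is within `2 / n` of `m`. -/
noncomputable def centralIndex (m : ℝ) (n : ℕ) : ℕ :=
  ⌊(n : ℝ) * (1 + m) / 2⌋₊

/-- The Stirling remainders of `n.choose k`, relative to those at the central index. -/
noncomputable def stirlingCorrection (m : ℝ) (n k : ℕ) : ℝ :=
  stirlingRemainder (centralIndex m n) - stirlingRemainder k +
    (stirlingRemainder (n - centralIndex m n) - stirlingRemainder (n - k))

/-- The weight of the configurations with `k` up-spins under the free energy `φ`, divided by a
factor independent of `k` that makes it close to `exp (-(x ^ 2 / 2))` at the normalized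
magnetization `x`. -/
noncomputable def localWeight (φ : ℝ → ℝ) (m : ℝ) (n k : ℕ) : ℝ :=
  exp (-(n * (φ (magLevel n k) - φ m)) + stirlingCorrection m n k)

lemma magLevel_mem_Icc {n k : ℕ} (hn : 1 ≤ n) (hk : k ≤ n) :
    magLevel n k ∈ Set.Icc (-1 : ℝ) 1 := by
  have hn' : (0 : ℝ) < n := by positivity
  have hk' : (k : ℝ) ≤ n := by exact_mod_cast hk
  rw [magLevel, Set.mem_Icc, le_div_iff₀ hn', div_le_iff₀ hn']
  constructor <;> linarith [k.cast_nonneg (α := ℝ)]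

lemma centralIndex_le {m : ℝ} (hm : m ≤ 1) (n : ℕ) : centralIndex m n ≤ n := by
  refine Nat.floor_le_of_le ?_
  nlinarith [n.cast_nonneg (α := ℝ)]

lemma abs_centralIndex_sub_le {m : ℝ} (hm : -1 ≤ m) {n : ℕ} (hn : 1 ≤ n) (k : ℕ) :
    |(centralIndex m n : ℝ) - k| ≤ n * |magLevel n k - m| / 2 + 1 := by
  have hfloor : |(centralIndex m n : ℝ) - n * (1 + m) / 2| ≤ 1 := by
    have hle : (centralIndex m n : ℝ) ≤ n * (1 + m) / 2 := Nat.floor_le <| by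
      have : 0 ≤ 1 + m := by linarith
      positivity
    have hlt : (n : ℝ) * (1 + m) / 2 < centralIndex m n + 1 := Nat.lt_floor_add_one _
    rw [abs_le]
    constructor <;> linarith
  have hk : |n * (1 + m) / 2 - (k : ℝ)| = n * |magLevel n k - m| / 2 := by
    have : n * (1 + m) / 2 - (k : ℝ) = -(n * (magLevel n k - m) / 2) := by
      rw [magLevel]
      field_simp
      ring
    rw [this, abs_neg, abs_div, abs_mul, Nat.abs_cast, abs_two]
  linarith [abs_sub_le (centralIndex m n : ℝ) (n * (1 + m) / 2) k]

lemma abs_stirlingCorrection_le {m δ : ℝ} (hm : m ∈ Set.Ioo (-1 : ℝ) 1) (hδ : 0 < δ)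
    (hδm : δ ≤ (1 - |m|) / 2) {n k : ℕ} (hn : 1 ≤ n) (hk : k ≤ n)
    (hy : |magLevel n k - m| ≤ δ) :
    |stirlingCorrection m n k| ≤ (2 * |magLevel n k - m| + 4 / n) / δ := by
  have hcentral := centralIndex_le hm.2.le n
  have hlt : (n : ℝ) * (1 + m) / 2 < centralIndex m n + 1 := Nat.lt_floor_add_one _
  have hle : (centralIndex m n : ℝ) ≤ n * (1 + m) / 2 := Nat.floor_le <| by
    have : 0 < 1 + m := by linarith [hm.1]
    positivity
  have hk' : (k : ℝ) = n * (1 + magLevel n k) / 2 := by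
    rw [magLevel]
    field_simp
    ring
  obtain ⟨hy₁, hy₂⟩ := abs_le.1 hy
  have hm₁ := neg_abs_le m
  have hm₂ := le_abs_self m
  have ha : 0 < n * δ / 2 := by positivity
  have hup := abs_stirlingRemainder_sub_le (i := centralIndex m n) (j := k) ha
    (by nlinarith) (by nlinarith)
  have hdown := abs_stirlingRemainder_sub_le (i := n - centralIndex m n) (j := n - k) ha
    (by rw [Nat.cast_sub hcentral]; nlinarith) (by rw [Nat.cast_sub hk]; nlinarith)
  rw [Nat.cast_sub hcentral, Nat.cast_sub hk, sub_sub_sub_cancel_left,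
    abs_sub_comm (k : ℝ)] at hdown
  calc |stirlingCorrection m n k|
      ≤ |(centralIndex m n : ℝ) - k| / (n * δ / 2) + |(centralIndex m n : ℝ) - k| / (n * δ / 2) :=
        (abs_add_le _ _).trans (add_le_add hup hdown)
    _ ≤ (n * |magLevel n k - m| / 2 + 1) / (n * δ / 2) +
          (n * |magLevel n k - m| / 2 + 1) / (n * δ / 2) := by
        gcongr <;> exact abs_centralIndex_sub_le hm.1.le hn k
    _ = (2 * |magLevel n k - m| + 4 / n) / δ := by field_simp; ring

lemma stirlingCorrection_le {m : ℝ} (hm : m ≤ 1) (n k : ℕ) :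
    stirlingCorrection m n k ≤ 2 * (1 + log n) := by
  have hup := (stirlingRemainder_monotone (centralIndex_le hm n)).trans
    (stirlingRemainder_le_one_add_log n)
  have hdown := (stirlingRemainder_monotone (n.sub_le (centralIndex m n))).trans
    (stirlingRemainder_le_one_add_log n)
  rw [stirlingCorrection]
  linarith [stirlingRemainder_nonneg k, stirlingRemainder_nonneg (n - k)]

lemma abs_exp_sub_one_le_mul_exp (E : ℝ) : |exp E - 1| ≤ |E| * exp |E| := by
  have hcomplex := Complex.norm_exp_sub_sum_le_norm_mul_exp E 1
  norm_num at hcomplex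
  exact_mod_cast hcomplex

lemma exists_abs_exp_add_sub_exp_le (b : ℝ) :
    ∃ C > 0, ∀ {x E ε : ℝ}, |E| ≤ ε * (1 + |x|) ^ 3 → |E| ≤ x ^ 2 / 4 + b →
      |exp (-(x ^ 2 / 2) + E) - exp (-(x ^ 2 / 2))| ≤ C * ε / (1 + |x|) ^ 2 := by
  obtain ⟨C, hC, hdecay⟩ := exists_one_add_abs_pow_mul_exp_neg_sq_le 5 (a := 1 / 4) (by norm_num)
  refine ⟨C * exp b, by positivity, fun {x E ε} hsmall hquad => ?_⟩
  have hε : 0 ≤ ε := nonneg_of_mul_nonneg_left ((abs_nonneg E).trans hsmall) (by positivity)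
  have hexp : exp (-(x ^ 2 / 2)) * exp (x ^ 2 / 4 + b) = exp (-(1 / 4 * x ^ 2)) * exp b := by
    rw [← exp_add, ← exp_add]
    ring_nf
  rw [le_div_iff₀ (by positivity)]
  calc |exp (-(x ^ 2 / 2) + E) - exp (-(x ^ 2 / 2))| * (1 + |x|) ^ 2
      = exp (-(x ^ 2 / 2)) * |exp E - 1| * (1 + |x|) ^ 2 := by
        rw [exp_add, ← mul_sub_one, abs_mul, abs_exp]
    _ ≤ exp (-(x ^ 2 / 2)) * (ε * (1 + |x|) ^ 3 * exp (x ^ 2 / 4 + b)) * (1 + |x|) ^ 2 := by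
        gcongr
        exact (abs_exp_sub_one_le_mul_exp E).trans (by gcongr)
    _ = (1 + |x|) ^ 5 * (exp (-(x ^ 2 / 2)) * exp (x ^ 2 / 4 + b)) * ε := by ring
    _ = (1 + |x|) ^ 5 * exp (-(1 / 4 * x ^ 2)) * exp b * ε := by rw [hexp]; ring
    _ ≤ C * exp b * ε := by gcongr; exact hdecay x

lemma abs_sqrt_mul_sqrt_mul (D : ℝ) (n : ℕ) (t : ℝ) : |√D * √n * t| = √D * √n * |t| := by
  rw [abs_mul, abs_of_nonneg (by positivity)]

lemma cubic_add_linear_le_sq {δ L D t : ℝ} {n : ℕ} (hδ : 0 < δ) (hL : 0 ≤ L) (hD : 0 ≤ D)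
    (hLδ : L * δ ≤ D / 4) (hn : 1 ≤ n) (ht : |t| ≤ δ) :
    n * (L * |t| ^ 3) + (2 * |t| + 4 / n) / δ ≤ (√D * √n * t) ^ 2 / 4 + (2 * δ + 4) / δ := by
  have hcubic : n * (L * |t| ^ 3) ≤ (√D * √n * t) ^ 2 / 4 := by
    calc n * (L * |t| ^ 3) = L * |t| * (n * |t| ^ 2) := by ring
      _ ≤ D / 4 * (n * |t| ^ 2) := by gcongr; exact le_trans (by gcongr) hLδ
      _ = (√D * √n * t) ^ 2 / 4 := by
        rw [mul_pow, mul_pow, sq_sqrt hD, sq_sqrt n.cast_nonneg, sq_abs]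
        ring
  have hinv : 4 / (n : ℝ) ≤ 4 := div_le_self (by norm_num) (by exact_mod_cast hn)
  gcongr

lemma cubic_add_linear_le_cube {δ L D : ℝ} {n : ℕ} (t : ℝ) (hδ : 0 < δ) (hL : 0 ≤ L) (hD : 0 < D)
    (hn : 1 ≤ n) :
    n * (L * |t| ^ 3) + (2 * |t| + 4 / n) / δ ≤
      (L / √D ^ 3 + (2 / √D + 4) / δ) / √n * (1 + |√D * √n * t|) ^ 3 := by
  have hs : 1 ≤ √(n : ℝ) := one_le_sqrt.2 (by exact_mod_cast hn)
  have hs2 : √(n : ℝ) ^ 2 = n := sq_sqrt n.cast_nonneg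
  rw [abs_sqrt_mul_sqrt_mul, ← hs2, sqrt_sq (by positivity)]
  set s := √(n : ℝ)
  have hcubic : s ^ 2 * (L * |t| ^ 3) = L / √D ^ 3 / s * (√D * s * |t|) ^ 3 := by field_simp
  have hlinear : 2 * |t| = 2 / √D / s * (√D * s * |t|) := by field_simp
  have hinv : 4 / s ^ 2 ≤ 4 / s := by gcongr; exact le_self_pow₀ hs two_ne_zero
  rw [hcubic, hlinear]
  set x := √D * s * |t|
  have hx : 0 ≤ x := by positivity
  calc L / √D ^ 3 / s * x ^ 3 + (2 / √D / s * x + 4 / s ^ 2) / δ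
      ≤ L / √D ^ 3 / s * (1 + x) ^ 3 + (2 / √D / s * (1 + x) ^ 3 + 4 / s * (1 + x) ^ 3) / δ := by
        gcongr
        · linarith
        · exact (le_add_of_nonneg_left zero_le_one).trans (le_self_pow₀ (by linarith) three_ne_zero)
        · exact hinv.trans (le_mul_of_one_le_right (by positivity) (one_le_pow₀ (by linarith)))
    _ = (L / √D ^ 3 + (2 / √D + 4) / δ) / s * (1 + x) ^ 3 := by ring

/-- The free energy is quadratic up to a cubic error and the Stirling correction varies slowly,
so both perturb the Gaussian exponent by `O(√n⁻¹)` at normalized magnetizations of order one. -/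
lemma exists_abs_localWeight_sub_exp_le_of_abs_sub_le {φ : ℝ → ℝ} {m δ L D : ℝ}
    (hm : m ∈ Set.Ioo (-1 : ℝ) 1) (hδ : 0 < δ) (hδm : δ ≤ (1 - |m|) / 2) (hL : 0 ≤ L) (hD : 0 < D)
    (hLδ : L * δ ≤ D / 4)
    (hφ : ∀ y, |y - m| ≤ δ → |φ y - φ m - D / 2 * (y - m) ^ 2| ≤ L * |y - m| ^ 3) :
    ∃ C > 0, ∀ {n k : ℕ}, 1 ≤ n → k ≤ n → |magLevel n k - m| ≤ δ →
      |localWeight φ m n k - exp (-(scaledMag D m n k ^ 2 / 2))| ≤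
        C / ((1 + |scaledMag D m n k|) ^ 2 * √n) := by
  obtain ⟨C, hC, hperturb⟩ := exists_abs_exp_add_sub_exp_le ((2 * δ + 4) / δ)
  refine ⟨C * (L / √D ^ 3 + (2 / √D + 4) / δ), by positivity, fun {n k} hn hk hnear => ?_⟩
  set R := φ (magLevel n k) - φ m - D / 2 * (magLevel n k - m) ^ 2 with hR
  have herror : |stirlingCorrection m n k - n * R| ≤
      n * (L * |magLevel n k - m| ^ 3) + (2 * |magLevel n k - m| + 4 / n) / δ := by
    calc |stirlingCorrection m n k - n * R|
        ≤ |stirlingCorrection m n k| + n * |R| := by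
          simpa [abs_mul] using abs_sub (stirlingCorrection m n k) (n * R)
      _ ≤ (2 * |magLevel n k - m| + 4 / n) / δ + n * (L * |magLevel n k - m| ^ 3) := by
          gcongr
          · exact abs_stirlingCorrection_le hm hδ hδm hn hk hnear
          · exact hφ _ hnear
      _ = _ := add_comm _ _
  have hsq : scaledMag D m n k ^ 2 = D * n * (magLevel n k - m) ^ 2 := by
    rw [scaledMag, mul_pow, mul_pow, sq_sqrt hD.le, sq_sqrt n.cast_nonneg]
  have hexponent : -(n * (φ (magLevel n k) - φ m)) + stirlingCorrection m n k =
      -(scaledMag D m n k ^ 2 / 2) + (stirlingCorrection m n k - n * R) := by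
    rw [hsq, hR]
    ring
  rw [localWeight, hexponent, mul_comm (_ ^ 2) (√n), ← div_div, mul_div_assoc C]
  exact hperturb (herror.trans (cubic_add_linear_le_cube _ hδ hL hD hn))
    (herror.trans (cubic_add_linear_le_sq hδ hL hD.le hLδ hn hnear))

lemma localWeight_le {φ : ℝ → ℝ} {m η : ℝ} (hm : m ≤ 1) {n k : ℕ} (hn : 1 ≤ n)
    (hgap : φ m + η ≤ φ (magLevel n k)) :
    localWeight φ m n k ≤ exp 2 * n ^ 2 * exp (-(η * n)) := by
  have hn' : (0 : ℝ) < n := by positivity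
  have hpow : exp 2 * n ^ 2 * exp (-(η * n)) = exp (-(η * n) + 2 * (1 + log n)) := by
    rw [mul_one_add, exp_add, exp_add, two_mul (log n), exp_add, exp_log hn']
    ring
  rw [hpow, localWeight, mul_comm η]
  gcongr
  · linarith
  · exact stirlingCorrection_le hm n k

lemma abs_magLevel_sub_le {m : ℝ} (hm : m ∈ Set.Icc (-1 : ℝ) 1) {n k : ℕ} (hn : 1 ≤ n)
    (hk : k ≤ n) : |magLevel n k - m| ≤ 2 := by
  have hlevel := magLevel_mem_Icc hn hk
  rw [abs_le]
  constructor <;> linarith [hlevel.1, hlevel.2, hm.1, hm.2]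

lemma exists_localWeight_le {φ : ℝ → ℝ} {m η : ℝ} (hm : m ∈ Set.Icc (-1 : ℝ) 1) (hη : 0 < η)
    (D : ℝ) :
    ∃ C > 0, ∀ {n k : ℕ}, 1 ≤ n → k ≤ n → φ m + η ≤ φ (magLevel n k) →
      localWeight φ m n k ≤ C / ((1 + |scaledMag D m n k|) ^ 2 * √n) := by
  obtain ⟨C, hC, hdecay⟩ := exists_one_add_pow_mul_exp_neg_le 4 hη
  refine ⟨exp 2 * (1 + 2 * √D) ^ 2 * C, by positivity, fun {n k} hn hk hgap => ?_⟩
  have hs : 1 ≤ √(n : ℝ) := one_le_sqrt.2 (by exact_mod_cast hn)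
  have hs2 : √(n : ℝ) ^ 2 = n := sq_sqrt n.cast_nonneg
  have hx : 1 + |scaledMag D m n k| ≤ (1 + 2 * √D) * √n := by
    rw [scaledMag, abs_sqrt_mul_sqrt_mul]
    have := mul_le_mul_of_nonneg_left (abs_magLevel_sub_le hm hn hk)
      (by positivity : 0 ≤ √D * √n)
    linarith
  have hpoly : (1 + |scaledMag D m n k|) ^ 2 * √n ≤ (1 + 2 * √D) ^ 2 * (n : ℝ) ^ 2 := by
    calc (1 + |scaledMag D m n k|) ^ 2 * √n ≤ ((1 + 2 * √D) * √n) ^ 2 * √n ^ 2 := by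
          gcongr
          exact le_self_pow₀ hs two_ne_zero
      _ = (1 + 2 * √D) ^ 2 * (n : ℝ) ^ 2 := by rw [mul_pow, hs2]; ring
  rw [le_div_iff₀ (by positivity)]
  calc localWeight φ m n k * ((1 + |scaledMag D m n k|) ^ 2 * √n)
      ≤ exp 2 * n ^ 2 * exp (-(η * n)) * ((1 + 2 * √D) ^ 2 * (n : ℝ) ^ 2) := by
        gcongr
        exact localWeight_le hm.2 hn hgap
    _ = exp 2 * (1 + 2 * √D) ^ 2 * ((n : ℝ) ^ 4 * exp (-(η * n))) := by ring
    _ ≤ exp 2 * (1 + 2 * √D) ^ 2 * ((1 + (n : ℝ)) ^ 4 * exp (-(η * n))) := by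
        gcongr
        linarith
    _ ≤ exp 2 * (1 + 2 * √D) ^ 2 * C := by gcongr; exact hdecay n n.cast_nonneg

lemma exists_exp_neg_sq_scaledMag_le {m δ D : ℝ} (hδ : 0 < δ) (hD : 0 < D) :
    ∃ C > 0, ∀ {n k : ℕ}, δ ≤ |magLevel n k - m| → 1 ≤ n →
      exp (-(scaledMag D m n k ^ 2 / 2)) ≤ C / ((1 + |scaledMag D m n k|) ^ 2 * √n) := by
  obtain ⟨C, hC, hdecay⟩ := exists_one_add_abs_pow_mul_exp_neg_sq_le 3 (a := 1 / 2) (by norm_num)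
  refine ⟨C / (√D * δ), by positivity, fun {n k} hfar hn => ?_⟩
  have hs : √(n : ℝ) ≤ (1 + |scaledMag D m n k|) / (√D * δ) := by
    rw [le_div_iff₀ (by positivity), scaledMag, abs_sqrt_mul_sqrt_mul]
    have := mul_le_mul_of_nonneg_left hfar (by positivity : 0 ≤ √D * √n)
    linarith
  set x := scaledMag D m n k
  rw [le_div_iff₀ (by positivity)]
  calc exp (-(x ^ 2 / 2)) * ((1 + |x|) ^ 2 * √n)
      ≤ exp (-(x ^ 2 / 2)) * ((1 + |x|) ^ 2 * ((1 + |x|) / (√D * δ))) := by gcongr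
    _ = (1 + |x|) ^ 3 * exp (-(1 / 2 * x ^ 2)) / (√D * δ) := by ring_nf
    _ ≤ C / (√D * δ) := by gcongr; exact hdecay x

lemma exists_abs_localWeight_sub_exp_le_of_le_abs_sub {φ : ℝ → ℝ} {m δ η D : ℝ}
    (hm : m ∈ Set.Icc (-1 : ℝ) 1) (hδ : 0 < δ) (hη : 0 < η) (hD : 0 < D)
    (hgap : ∀ y ∈ Set.Icc (-1 : ℝ) 1, δ ≤ |y - m| → φ m + η ≤ φ y) :
    ∃ C > 0, ∀ {n k : ℕ}, 1 ≤ n → k ≤ n → δ ≤ |magLevel n k - m| →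
      |localWeight φ m n k - exp (-(scaledMag D m n k ^ 2 / 2))| ≤
        C / ((1 + |scaledMag D m n k|) ^ 2 * √n) := by
  obtain ⟨C₁, hC₁, hweight⟩ := exists_localWeight_le (φ := φ) hm hη D
  obtain ⟨C₂, hC₂, hgauss⟩ := exists_exp_neg_sq_scaledMag_le (m := m) hδ hD
  refine ⟨C₁ + C₂, by positivity, fun {n k} hn hk hfar => ?_⟩
  calc |localWeight φ m n k - exp (-(scaledMag D m n k ^ 2 / 2))|
      ≤ localWeight φ m n k + exp (-(scaledMag D m n k ^ 2 / 2)) := by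
        simpa [localWeight] using
          abs_sub (localWeight φ m n k) (exp (-(scaledMag D m n k ^ 2 / 2)))
    _ ≤ _ := add_le_add (hweight hn hk (hgap _ (magLevel_mem_Icc hn hk) hfar)) (hgauss hfar hn)
    _ = _ := (add_div _ _ _).symm

theorem exists_abs_localWeight_sub_exp_le {φ : ℝ → ℝ} {m : ℝ} (hm : m ∈ Set.Ioo (-1 : ℝ) 1)
    (hφ : ContinuousOn φ (Set.Icc (-1) 1)) (hφm : ContDiffAt ℝ 3 φ m)
    (hmin : ∀ y ∈ Set.Icc (-1 : ℝ) 1, y ≠ m → φ m < φ y) (hconv : 0 < iteratedDeriv 2 φ m) :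
    ∃ C > 0, ∀ {n k : ℕ}, 1 ≤ n → k ≤ n →
      |localWeight φ m n k - exp (-(scaledMag (iteratedDeriv 2 φ m) m n k ^ 2 / 2))| ≤
        C / ((1 + |scaledMag (iteratedDeriv 2 φ m) m n k|) ^ 2 * √n) := by
  have hlocalMin : IsLocalMin φ m := by
    filter_upwards [Icc_mem_nhds hm.1 hm.2] with y hy
    rcases eq_or_ne y m with rfl | hne
    exacts [le_rfl, (hmin y hy hne).le]
  obtain ⟨δ₀, hδ₀, L, hL, htaylor⟩ := exists_abs_sub_sq_le_of_isLocalMin hφm hlocalMin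
  set D := iteratedDeriv 2 φ m
  have hm' : 0 < (1 - |m|) / 2 := by linarith [abs_lt.2 hm]
  obtain ⟨δ, hδ, hδle⟩ := exists_between (lt_min hδ₀ (lt_min hm' (by positivity : 0 < D / 4 / L)))
  simp only [lt_min_iff, lt_div_iff₀' hL] at hδle
  obtain ⟨hδδ₀, hδm, hLδ⟩ := hδle
  obtain ⟨η, hη, hgap⟩ := exists_add_le_of_isCompact_of_lt isCompact_Icc hφ hmin hδ
  obtain ⟨C₁, hC₁, hnear⟩ := exists_abs_localWeight_sub_exp_le_of_abs_sub_le hm hδ hδm.le hL.le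
    hconv hLδ.le fun y hy => htaylor y (hy.trans hδδ₀.le)
  obtain ⟨C₂, -, hfar⟩ := exists_abs_localWeight_sub_exp_le_of_le_abs_sub
    (Set.Ioo_subset_Icc_self hm) hδ hη hconv hgap
  refine ⟨max C₁ C₂, by positivity, fun {n k} hn hk => ?_⟩
  rcases le_total |magLevel n k - m| δ with hle | hge
  · exact (hnear hn hk hle).trans (by gcongr; exact le_max_left _ _)
  · exact (hfar hn hk hge).trans (by gcongr; exact le_max_right _ _)

lemma exists_abs_latticeCDF_div_sub_stdNormalCDF_le {B H c : ℝ} (hc : 0 < c) {x₀ h : ℕ → ℝ}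
    {u : ℕ → ℕ → ℝ} (hh : ∀ n ≥ 1, 0 < h n) (hH : ∀ n ≥ 1, h n ≤ H)
    (hlim : Tendsto h atTop (nhds 0)) (hleft : ∀ n ≥ 1, h n * x₀ n ≤ -c)
    (hright : ∀ n ≥ 1, c ≤ h n * (x₀ n + h n * n))
    (hu : ∀ n ≥ 1, IsGaussianOnLattice B (x₀ n) (h n) n (u n))
    (hpos : ∀ n ≥ 1, 0 < ∑ k ∈ Finset.range (n + 1), u n k) :
    ∃ C > 0, ∀ n ≥ 1, ∀ z, |latticeCDF (x₀ n) (h n) n (u n) z /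
      ∑ k ∈ Finset.range (n + 1), u n k - stdNormalCDF z| ≤ C * h n / (1 + |z|) := by
  obtain ⟨C₁, -, hmass⟩ := exists_abs_sum_sub_one_le H B hc
  obtain ⟨C₂, hC₂, hcdf⟩ := exists_abs_latticeCDF_sub_mul_le H B hc
  set U := fun n => ∑ k ∈ Finset.range (n + 1), u n k
  have hU : Tendsto U atTop (nhds 1) := by
    refine tendsto_iff_norm_sub_tendsto_zero.2 <| squeeze_zero' (.of_forall fun _ => norm_nonneg _)
      (eventually_atTop.2 ⟨1, fun n hn => ?_⟩) (by simpa using hlim.const_mul C₁)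
    exact hmass (hh n hn) (hH n hn) (hleft n hn) (hright n hn) (hu n hn)
  obtain ⟨M, hM⟩ := (hU.inv₀ one_ne_zero).bddAbove_range
  have hM' (n : ℕ) : (U n)⁻¹ ≤ max M 1 := (hM ⟨n, rfl⟩).trans (le_max_left M 1)
  refine ⟨max M 1 * C₂, by positivity, fun n hn z => ?_⟩
  have hUn : 0 < U n := hpos n hn
  have hbound := hcdf (hh n hn) (hH n hn) (hleft n hn) (hright n hn) (hu n hn) z
  have hratio : latticeCDF (x₀ n) (h n) n (u n) z / U n - stdNormalCDF z =
      (U n)⁻¹ * (latticeCDF (x₀ n) (h n) n (u n) z - U n * stdNormalCDF z) := by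
    rw [inv_mul_eq_div, sub_div, mul_div_cancel_left₀ _ hUn.ne']
  calc _ = (U n)⁻¹ * |latticeCDF (x₀ n) (h n) n (u n) z - U n * stdNormalCDF z| := by
        rw [hratio, abs_mul, abs_of_pos (inv_pos.2 hUn)]
    _ ≤ max M 1 * (C₂ * h n / (1 + |z|)) := by
        gcongr
        exact hM' n
    _ = max M 1 * C₂ * h n / (1 + |z|) := by ring

/-- The spacing of the lattice of normalized magnetizations. -/
noncomputable def latticeStep (D : ℝ) (n : ℕ) : ℝ :=
  2 * √D / √n

/-- The normalized magnetization of the configuration without up-spins. -/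
noncomputable def latticeOrigin (D m : ℝ) (n : ℕ) : ℝ :=
  -(√D * √n * (1 + m))

lemma latticeStep_pos {D : ℝ} (hD : 0 < D) {n : ℕ} (hn : 1 ≤ n) : 0 < latticeStep D n := by
  rw [latticeStep]
  positivity

lemma latticeStep_le (D : ℝ) {n : ℕ} (hn : 1 ≤ n) : latticeStep D n ≤ 2 * √D :=
  div_le_self (by positivity) (one_le_sqrt.2 (by exact_mod_cast hn))

lemma tendsto_latticeStep (D : ℝ) : Tendsto (latticeStep D) atTop (nhds 0) :=
  (tendsto_sqrt_atTop.comp tendsto_natCast_atTop_atTop).const_div_atTop _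

lemma scaledMag_eq_latticeOrigin_add (D m : ℝ) {n : ℕ} (hn : 1 ≤ n) (k : ℕ) :
    scaledMag D m n k = latticeOrigin D m n + latticeStep D n * k := by
  have hs : √(n : ℝ) ^ 2 = n := sq_sqrt n.cast_nonneg
  rw [scaledMag, magLevel, latticeOrigin, latticeStep]
  field_simp
  rw [hs]
  ring

lemma scaledMag_eq_div {D : ℝ} (hD : 0 < D) (m : ℝ) {n : ℕ} (hn : 1 ≤ n) (k : ℕ) :
    scaledMag D m n k = (2 * k - n - n * m) / √(n / D) := by
  have hs : √(n : ℝ) ^ 2 = n := sq_sqrt n.cast_nonneg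
  rw [scaledMag, magLevel, sqrt_div n.cast_nonneg]
  field_simp
  rw [hs]

lemma latticeStep_mul_latticeOrigin {D : ℝ} (hD : 0 ≤ D) (m : ℝ) {n : ℕ} (hn : 1 ≤ n) :
    latticeStep D n * latticeOrigin D m n = -(2 * D * (1 + m)) := by
  have hDs : √D ^ 2 = D := sq_sqrt hD
  rw [latticeStep, latticeOrigin]
  nth_rw 3 [← hDs]
  field_simp

lemma latticeStep_mul_add {D : ℝ} (hD : 0 ≤ D) (m : ℝ) {n : ℕ} (hn : 1 ≤ n) :
    latticeStep D n * (latticeOrigin D m n + latticeStep D n * n) = 2 * D * (1 - m) := by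
  have hs : √(n : ℝ) ^ 2 = n := sq_sqrt n.cast_nonneg
  have hstep : latticeStep D n ^ 2 * n = 4 * D := by
    rw [latticeStep, div_pow, mul_pow, sq_sqrt hD, hs]
    field_simp
    ring
  linear_combination latticeStep_mul_latticeOrigin hD m hn + hstep

lemma isGaussianOnLattice_localWeight {φ : ℝ → ℝ} {m C D : ℝ} (hD : 0 < D) {n : ℕ} (hn : 1 ≤ n)
    (hlocal : ∀ k ≤ n, |localWeight φ m n k - exp (-(scaledMag D m n k ^ 2 / 2))| ≤
      C / ((1 + |scaledMag D m n k|) ^ 2 * √n)) :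
    IsGaussianOnLattice ((√(2 * π))⁻¹ * C / (2 * √D)) (latticeOrigin D m n) (latticeStep D n) n
      fun k => latticeStep D n * (√(2 * π))⁻¹ * localWeight φ m n k := by
  intro k hk
  have hstep := latticeStep_pos hD hn
  rw [← scaledMag_eq_latticeOrigin_add D m hn k, gaussianPDFReal_zero_one_apply, ← mul_assoc,
    ← mul_sub, abs_mul, abs_of_pos (by positivity)]
  calc latticeStep D n * (√(2 * π))⁻¹ *
        |localWeight φ m n k - exp (-(scaledMag D m n k ^ 2 / 2))|
      ≤ latticeStep D n * (√(2 * π))⁻¹ * (C / ((1 + |scaledMag D m n k|) ^ 2 * √n)) := by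
        gcongr
        exact hlocal k hk
    _ = _ := by
        rw [latticeStep]
        field_simp

lemma latticeCDF_const_mul (x₀ h : ℝ) (n : ℕ) (a : ℝ) (u : ℕ → ℝ) (z : ℝ) :
    latticeCDF x₀ h n (fun k => a * u k) z = a * latticeCDF x₀ h n u z :=
  (Finset.mul_sum _ _ _).symm

lemma exists_abs_latticeCDF_localWeight_div_sub_le {φ : ℝ → ℝ} {m C D : ℝ}
    (hm : m ∈ Set.Ioo (-1 : ℝ) 1) (hD : 0 < D)
    (hlocal : ∀ {n k : ℕ}, 1 ≤ n → k ≤ n →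
      |localWeight φ m n k - exp (-(scaledMag D m n k ^ 2 / 2))| ≤
        C / ((1 + |scaledMag D m n k|) ^ 2 * √n)) :
    ∃ c > 0, ∀ n : ℕ, 1 ≤ n → ∀ z,
      |latticeCDF (latticeOrigin D m n) (latticeStep D n) n (localWeight φ m n) z /
        ∑ k ∈ Finset.range (n + 1), localWeight φ m n k - stdNormalCDF z| ≤
        c / ((1 + |z|) * √n) := by
  have hm₁ : 0 < 2 * D * (1 + m) := mul_pos (by positivity) (by linarith [hm.1])
  have hm₂ : 0 < 2 * D * (1 - m) := mul_pos (by positivity) (by linarith [hm.2])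
  have hscale (n : ℕ) (hn : n ≥ 1) : 0 < latticeStep D n * (√(2 * π))⁻¹ :=
    mul_pos (latticeStep_pos hD hn) (by positivity)
  obtain ⟨c, hc, hcdf⟩ := exists_abs_latticeCDF_div_sub_stdNormalCDF_le (lt_min hm₁ hm₂)
    (fun n hn => latticeStep_pos hD hn) (fun n hn => latticeStep_le D hn) (tendsto_latticeStep D)
    (fun n hn => (latticeStep_mul_latticeOrigin hD.le m hn).trans_le
      (neg_le_neg (min_le_left _ _)))
    (fun n hn => (min_le_right _ _).trans_eq (latticeStep_mul_add hD.le m hn).symm)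
    (fun n hn => isGaussianOnLattice_localWeight hD hn fun k hk => hlocal hn hk)
    (fun n hn => Finset.sum_pos (fun k _ => mul_pos (hscale n hn) (exp_pos _))
      Finset.nonempty_range_add_one)
  refine ⟨c * (2 * √D), by positivity, fun n hn z => ?_⟩
  have hbound := hcdf n hn z
  rw [latticeCDF_const_mul, ← Finset.mul_sum, mul_div_mul_left _ _ (hscale n hn).ne'] at hbound
  refine hbound.trans_eq ?_
  rw [latticeStep]
  field_simp

/-! ### Mean-field models -/

/-- The Boltzmann weight of a configuration in the mean-field model with interaction `g`. -/
noncomputable def meanFieldWeight (g : ℝ → ℝ) (n : ℕ) (x : Fin n → Bool) : ℝ :=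
  exp (n * g (magPP n x))

/-- The Gibbs measure of the mean-field model whose energy per particle is a function `-g` of the
magnetization per particle. -/
noncomputable def meanFieldMeasure (g : ℝ → ℝ) (n : ℕ) : Measure (Fin n → Bool) :=
  (∑ x, ENNReal.ofReal (meanFieldWeight g n x))⁻¹ •
    ∑ x, ENNReal.ofReal (meanFieldWeight g n x) • Measure.dirac x

lemma cubicProb_eq_meanFieldMeasure_real (n : ℕ) (K J : ℝ) (s : Set (Fin n → Bool)) :
    cubicProb n K J s = (meanFieldMeasure (fun y => K / 3 * y ^ 3 + J / 2 * y ^ 2) n).real s :=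
  rfl

lemma totalMag_eq (n : ℕ) (x : Fin n → Bool) :
    totalMag n x = 2 * (Finset.univ.filter fun i => x i).card - n := by
  have hspin (b : Bool) : spin b = 2 * (if b then 1 else 0) - 1 := by
    cases b <;> norm_num [spin]
  simp_rw [totalMag, hspin, Finset.sum_sub_distrib, ← Finset.mul_sum, Finset.sum_boole]
  simp

lemma sum_totalMag (n : ℕ) (f : ℝ → ℝ) :
    ∑ x, f (totalMag n x) = ∑ k ∈ Finset.range (n + 1), n.choose k * f (2 * k - n) := by
  have hcard := Finset.sum_powerset_apply_card (fun k : ℕ => f (2 * (k : ℝ) - n))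
    (x := (Finset.univ : Finset (Fin n)))
  simp only [Finset.powerset_univ, Finset.card_univ, Fintype.card_fin, nsmul_eq_mul] at hcard
  rw [← hcard]
  refine Finset.sum_bij' (fun x _ => Finset.univ.filter fun i => x i)
    (fun s _ i => decide (i ∈ s)) ?_ ?_ ?_ ?_ ?_ <;> simp [totalMag_eq]

lemma meanFieldMeasure_real_apply (g : ℝ → ℝ) (n : ℕ) (s : Set (Fin n → Bool)) :
    (meanFieldMeasure g n).real s =
      (∑ x, s.indicator (meanFieldWeight g n) x) / ∑ x, meanFieldWeight g n x := by
  have hw (x : Fin n → Bool) : 0 ≤ meanFieldWeight g n x := (exp_pos _).le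
  have hterm (x : Fin n → Bool) : (ENNReal.ofReal (meanFieldWeight g n x) • Measure.dirac x) s =
      ENNReal.ofReal (s.indicator (meanFieldWeight g n) x) := by
    by_cases hx : x ∈ s <;> simp [hx]
  rw [Measure.real, meanFieldMeasure, Measure.smul_apply, Measure.finsetSum_apply,
    Finset.sum_congr rfl fun x _ => hterm x, ← ENNReal.ofReal_sum_of_nonneg fun x _ => hw x,
    ← ENNReal.ofReal_sum_of_nonneg fun x _ => s.indicator_nonneg (fun x _ => hw x) x, smul_eq_mul,
    ENNReal.toReal_mul, ENNReal.toReal_inv,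
    ENNReal.toReal_ofReal (Finset.sum_nonneg fun x _ => hw x),
    ENNReal.toReal_ofReal
      (Finset.sum_nonneg fun x _ => s.indicator_nonneg (fun x _ => hw x) x), inv_mul_eq_div]

lemma exists_choose_mul_exp_eq (g : ℝ → ℝ) (m : ℝ) {n : ℕ} (hn : 1 ≤ n) :
    ∃ A > 0, ∀ k ≤ n,
      n.choose k * exp (n * g (magLevel n k)) = A * localWeight (freeEnergy g) m n k := by
  refine ⟨exp (-(n * freeEnergy g m) + (stirlingRemainder n - stirlingRemainder (centralIndex m n) -
    stirlingRemainder (n - centralIndex m n))), exp_pos _, fun k hk => ?_⟩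
  have hchoose : (0 : ℝ) < n.choose k := by exact_mod_cast Nat.choose_pos hk
  rw [← exp_log hchoose, log_choose hn hk, ← magLevel, localWeight, stirlingCorrection,
    ← exp_add, ← exp_add]
  simp only [freeEnergy]
  ring_nf

lemma meanFieldMeasure_real_eq_div (g : ℝ → ℝ) (m : ℝ) {n : ℕ} (hn : 1 ≤ n) (p : ℝ → Prop)
    [DecidablePred p] :
    (meanFieldMeasure g n).real {x | p (totalMag n x)} =
      (∑ k ∈ (Finset.range (n + 1)).filter fun k : ℕ => p (2 * k - n),
        localWeight (freeEnergy g) m n k) /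
        ∑ k ∈ Finset.range (n + 1), localWeight (freeEnergy g) m n k := by
  obtain ⟨A, hA, hweight⟩ := exists_choose_mul_exp_eq g m hn
  have hsum (q : ℝ → Prop) [DecidablePred q] :
      ∑ x, (if q (totalMag n x) then meanFieldWeight g n x else 0) =
        A * ∑ k ∈ (Finset.range (n + 1)).filter fun k : ℕ => q (2 * k - n),
          localWeight (freeEnergy g) m n k := by
    rw [Finset.mul_sum, Finset.sum_filter]
    refine (sum_totalMag n fun S => if q S then exp (n * g (S / n)) else 0).trans
      (Finset.sum_congr rfl fun k hk => ?_)
    rw [mul_ite, mul_zero, ← hweight k (Finset.mem_range_succ_iff.1 hk), magLevel]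
  have htotal := hsum fun _ => True
  simp only [if_true, Finset.filter_true] at htotal
  simp only [meanFieldMeasure_real_apply, Set.indicator_apply, Set.mem_ofPred_eq]
  rw [hsum p, htotal, mul_div_mul_left _ _ hA.ne']

lemma meanFieldMeasure_real_eq_latticeCDF_div (g : ℝ → ℝ) (m : ℝ) {D : ℝ} (hD : 0 < D) {n : ℕ}
    (hn : 1 ≤ n) (z : ℝ) :
    (meanFieldMeasure g n).real {x | (totalMag n x - n * m) / √(n / D) ≤ z} =
      latticeCDF (latticeOrigin D m n) (latticeStep D n) n (localWeight (freeEnergy g) m n) z /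
        ∑ k ∈ Finset.range (n + 1), localWeight (freeEnergy g) m n k := by
  rw [meanFieldMeasure_real_eq_div g m hn fun S => (S - n * m) / √(n / D) ≤ z]
  simp only [latticeCDF, ← scaledMag_eq_div hD m hn, scaledMag_eq_latticeOrigin_add D m hn]

theorem stmt_9_general {g : ℝ → ℝ} {m : ℝ} (hm : m ∈ Set.Ioo (-1 : ℝ) 1)
    (hg : ContinuousOn g (Set.Icc (-1) 1)) (hgm : ContDiffAt ℝ 3 g m)
    (hmin : ∀ y ∈ Set.Icc (-1 : ℝ) 1, y ≠ m → freeEnergy g m < freeEnergy g y)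
    (hconv : 0 < iteratedDeriv 2 (freeEnergy g) m) :
    ∃ c > 0, ∀ n : ℕ, 1 ≤ n → ∀ z : ℝ,
      |(meanFieldMeasure g n).real
          {x | (totalMag n x - n * m) / √(n / iteratedDeriv 2 (freeEnergy g) m) ≤ z} -
        stdNormalCDF z| ≤ c / ((1 + |z|) * √n) := by
  obtain ⟨C, -, hlocal⟩ := exists_abs_localWeight_sub_exp_le hm
    (continuous_binEnt.continuousOn.sub hg) ((contDiffAt_binEnt hm).sub hgm) hmin hconv
  obtain ⟨c, hc, hcdf⟩ := exists_abs_latticeCDF_localWeight_div_sub_le hm hconv hlocal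
  refine ⟨c, hc, fun n hn z => ?_⟩
  rw [meanFieldMeasure_real_eq_latticeCDF_div g m hconv hn]
  exact hcdf n hn z

/-- Non-uniform Berry–Esseen bound for the rescaled magnetization
`W_n = (S_n − n m*)/√(n/φ''(m*))` of the cubic Curie–Weiss model, when `φ_{K,J}`
has a unique minimizer `m*` in `(−1,1)` with `φ''_{K,J}(m*) > 0`:
`|P_{n,K,J}(W_n ≤ z) − Φ(z)| ≤ c/((1+|z|)√n)` for all `z`. -/
theorem stmt_9 (K J : ℝ) (hK : 0 < K) (mstar : ℝ)
    (hmem : mstar ∈ Set.Ioo (-1 : ℝ) 1)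
    (hmin : ∀ y ∈ Set.Icc (-1 : ℝ) 1, phiKJ K J mstar ≤ phiKJ K J y)
    (huniq : ∀ y ∈ Set.Icc (-1 : ℝ) 1, phiKJ K J y = phiKJ K J mstar → y = mstar)
    (hconv : 0 < iteratedDeriv 2 (phiKJ K J) mstar) :
    ∃ c : ℝ, 0 < c ∧ ∀ n : ℕ, 1 ≤ n → ∀ z : ℝ,
      |cubicProb n K J
          {x | (totalMag n x - n * mstar) /
                Real.sqrt (n / iteratedDeriv 2 (phiKJ K J) mstar) ≤ z}
        - stdNormalCDF z| ≤ c / ((1 + |z|) * Real.sqrt n) := by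
  simp only [phiKJ_eq_freeEnergy, cubicProb_eq_meanFieldMeasure_real] at *
  exact stmt_9_general hmem (by fun_prop) (by fun_prop)
    (fun y hy hne => (hmin y hy).lt_of_ne fun h => hne (huniq y hy h.symm)) hconv
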